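/- Let m ≥ 1 and ε > 0. There exists a smooth function g_ε : (−ε,ε) → ℝ with g_ε'(x) > 0 for all x ∈ (−ε,ε) such that g_ε(x) = −1/((m−1)x^{m−1}) on (ε/2, ε) and g_ε(x) = 1/((m−1)|x|^{m−1}) − 2^{m+1}/((m−1)ε^{m−1}) on (−ε, −ε/2) (for m > 1), respectively g_ε(x) = log|x| on (ε/2,ε) and g_ε(x) = −log|x| + 2 log(ε/2) − ε on (−ε,−ε/2) (for m = 1). -/

import Mathlib

/-!
Both prescribed pieces are primitives of `x ↦ 1 / |x| ^ m`, on the two sides of the origin, and the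
right piece at `ε / 2` exceeds the left piece at `-(ε / 2)`. So it suffices to find a smooth
positive `h`, equal to `1 / |x| ^ m` for `|x| ≥ ε / 2`, whose integral over `[-(ε / 2), ε / 2]` is
exactly that gap; then `g` is a primitive of `h`.

The function `1 / |x| ^ m` first gets some smooth positive extension `f`
(`exists_smooth_pos_eq_abs_pow_inv`). The integral is then corrected by
`h = f * (1 - ψ) + c * ψ`, where `ψ` is a bump function supported in `(-(ε / 2), ε / 2)` and equal
to `1` on so large a subinterval that `f * (1 - ψ)` contributes less than the gap, which makes the
constant `c` that yields the right integral positive (`exists_smooth_pos_integral_eq`). Integrating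
`h` gives the interpolation `exists_smooth_interpolation`.
-/

/-- Regularising `|x| = √(x ^ 2)` as `√(x ^ 2 + φ x)`, with `φ` a bump function at the origin,
extends `1 / |x| ^ m` smoothly and positively across `(-a, a)`. -/
lemma exists_smooth_pos_eq_abs_pow_inv (m : ℕ) {a : ℝ} (ha : 0 < a) :
    ∃ f : ℝ → ℝ, ContDiff ℝ (⊤ : ℕ∞) f ∧ (∀ x, 0 < f x) ∧
      ∀ x, a ≤ |x| → f x = (|x| ^ m)⁻¹ := by
  let φ : ContDiffBump (0 : ℝ) := ⟨a / 2, a, by positivity, by linarith⟩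
  have hpos : ∀ x, 0 < x ^ 2 + φ x := by
    intro x
    rcases eq_or_ne x 0 with rfl | hx
    · have := φ.pos_of_mem_ball (x := 0) (by simpa [φ] using ha)
      simpa using this
    · have := φ.nonneg (x := x)
      positivity
  have hφ : ContDiff ℝ (⊤ : ℕ∞) φ := φ.contDiff
  refine ⟨fun x => (√(x ^ 2 + φ x) ^ m)⁻¹, ?_, ?_, ?_⟩
  · refine ContDiff.inv ?_ fun x => ?_
    · exact (((contDiff_id.pow 2).add hφ).sqrt fun x => (hpos x).ne').pow m
    · exact pow_ne_zero _ (Real.sqrt_pos.2 (hpos x)).ne'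
  · intro x
    have := Real.sqrt_pos.2 (hpos x)
    positivity
  · intro x hx
    have : φ x = 0 := φ.zero_of_le_dist (by simpa [φ] using hx)
    simp [this, Real.sqrt_sq_eq_abs]

/-- A smooth positive function can be modified inside `(-a, a)` to have any prescribed positive
integral over `[-a, a]`, staying smooth and positive. -/
lemma exists_smooth_pos_integral_eq {f : ℝ → ℝ} (hf : ContDiff ℝ (⊤ : ℕ∞) f)
    (hpos : ∀ x, 0 < f x) {a G : ℝ} (ha : 0 < a) (hG : 0 < G) :
    ∃ h : ℝ → ℝ, ContDiff ℝ (⊤ : ℕ∞) h ∧ (∀ x, 0 < h x) ∧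
      (∀ x, a ≤ |x| → h x = f x) ∧ ∫ x in (-a)..a, h x = G := by
  have hfc := hf.continuous
  -- By continuity in `r`, some `r < a` leaves mass less than `G` outside `[-r, r]`.
  obtain ⟨r, hr0, hra, hr⟩ : ∃ r, 0 < r ∧ r < a ∧
      (∫ x in (-a)..a, f x) - G < ∫ x in (-r)..r, f x := by
    have hint : ∀ u v, IntervalIntegrable f MeasureTheory.volume u v :=
      fun u v => hfc.intervalIntegrable u v
    have hP : Continuous fun r => ∫ x in (0 : ℝ)..r, f x :=
      intervalIntegral.continuous_primitive hint 0
    have hcont : Continuous fun r => ∫ x in (-r)..r, f x := by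
      have : (fun r => ∫ x in (-r)..r, f x) =
          fun r => (∫ x in (0 : ℝ)..r, f x) - ∫ x in (0 : ℝ)..(-r), f x := by
        funext r
        rw [intervalIntegral.integral_interval_sub_left (hint _ _) (hint _ _)]
      rw [this]
      exact hP.sub (hP.comp continuous_neg)
    have h1 : ∀ᶠ r in nhdsWithin a (Set.Iio a),
        (∫ x in (-a)..a, f x) - G < ∫ x in (-r)..r, f x :=
      (hcont.continuousAt.tendsto.mono_left nhdsWithin_le_nhds).eventually_const_lt
        (by linarith)
    obtain ⟨r, h1, h2, h3⟩ := (h1.and (Ioo_mem_nhdsLT ha)).exists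
    exact ⟨r, h2, h3, h1⟩
  let ψ : ContDiffBump (0 : ℝ) := ⟨r, a, hr0, hra⟩
  have hψ : ContDiff ℝ (⊤ : ℕ∞) ψ := ψ.contDiff
  have hψc := hψ.continuous
  have hfψ : ∫ x in (-r)..r, f x ≤ ∫ x in (-a)..a, f x * ψ x := by
    have h1 : ∫ x in (-r)..r, f x = ∫ x in (-r)..r, f x * ψ x := by
      refine intervalIntegral.integral_congr fun x hx => ?_
      rw [Set.uIcc_of_le (by linarith)] at hx
      have : ψ x = 1 := ψ.one_of_mem_closedBall (by
        simpa [ψ, Real.closedBall_eq_Icc] using hx)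
      simp [this]
    rw [h1]
    exact intervalIntegral.integral_mono_interval (by linarith) (by linarith) hra.le
      (Filter.Eventually.of_forall fun x => mul_nonneg (hpos x).le ψ.nonneg)
      ((hfc.mul hψc).intervalIntegrable _ _)
  have hI : 0 < ∫ x in (-a)..a, ψ x := by
    refine intervalIntegral.intervalIntegral_pos_of_pos_on (hψc.intervalIntegrable _ _)
      (fun x hx => ψ.pos_of_mem_ball ?_) (by linarith)
    simpa [ψ, Real.ball_eq_Ioo] using hx
  set I := ∫ x in (-a)..a, ψ x
  set c := (G - ((∫ x in (-a)..a, f x) - ∫ x in (-a)..a, f x * ψ x)) / I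
  have hc0 : 0 < c := div_pos (by linarith) hI
  refine ⟨fun x => (f x - f x * ψ x) + c * ψ x, ?_, ?_, ?_, ?_⟩
  · exact (hf.sub (hf.mul hψ)).add (contDiff_const.mul hψ)
  · intro x
    have h0 : 0 ≤ ψ x := ψ.nonneg
    have h1 : ψ x ≤ 1 := ψ.le_one
    rcases h0.eq_or_lt with h | h
    · simpa [← h] using hpos x
    · have := mul_nonneg (hpos x).le (sub_nonneg.2 h1)
      have := mul_pos hc0 h
      linarith
  · intro x hx
    have : ψ x = 0 := ψ.zero_of_le_dist (by simpa [ψ] using hx)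
    simp [this]
  · have h1 : IntervalIntegrable (fun x => f x - f x * ψ x) MeasureTheory.volume (-a) a :=
      (hfc.sub (hfc.mul hψc)).intervalIntegrable _ _
    have h2 : IntervalIntegrable (fun x => f x * ψ x) MeasureTheory.volume (-a) a :=
      (hfc.mul hψc).intervalIntegrable _ _
    have h3 : IntervalIntegrable (fun x => c * ψ x) MeasureTheory.volume (-a) a :=
      (continuous_const.mul hψc).intervalIntegrable _ _
    have h4 : c * I = G - ((∫ x in (-a)..a, f x) - ∫ x in (-a)..a, f x * ψ x) :=
      div_mul_cancel₀ _ hI.ne'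
    calc ∫ x in (-a)..a, ((f x - f x * ψ x) + c * ψ x)
        = ((∫ x in (-a)..a, f x) - ∫ x in (-a)..a, f x * ψ x) + c * I := by
          rw [intervalIntegral.integral_add h1 h3,
            intervalIntegral.integral_sub (hfc.intervalIntegrable _ _) h2,
            intervalIntegral.integral_const_mul]
      _ = G := by rw [h4]; ring

/-- Two primitives `L`, `R` of a smooth positive function, on `(-∞, -a]` and `[a, ∞)` respectively,
with `L (-a) < R a`, have a common smooth extension with positive derivative. -/
lemma exists_smooth_interpolation {f L R : ℝ → ℝ} (hf : ContDiff ℝ (⊤ : ℕ∞) f)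
    (hpos : ∀ x, 0 < f x) {a : ℝ} (ha : 0 < a)
    (hL : ∀ x ≤ -a, HasDerivAt L (f x) x) (hR : ∀ x, a ≤ x → HasDerivAt R (f x) x)
    (hgap : L (-a) < R a) :
    ∃ g : ℝ → ℝ, ContDiff ℝ (⊤ : ℕ∞) g ∧ (∀ x, 0 < deriv g x) ∧
      (∀ x, a ≤ x → g x = R x) ∧ ∀ x ≤ -a, g x = L x := by
  obtain ⟨h, hh, hhpos, hhf, hhG⟩ :=
    exists_smooth_pos_integral_eq hf hpos ha (sub_pos.2 hgap)
  have hint : ∀ u v, IntervalIntegrable h MeasureTheory.volume u v :=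
    fun u v => hh.continuous.intervalIntegrable u v
  have hder : ∀ x, HasDerivAt (fun x => R a + ∫ t in a..x, h t) (h x) x := fun x =>
    (hh.continuous.integral_hasStrictDerivAt a x).hasDerivAt.const_add _
  refine ⟨fun x => R a + ∫ t in a..x, h t, ?_, ?_, ?_, ?_⟩
  · rw [contDiff_infty_iff_deriv]
    refine ⟨fun x => (hder x).differentiableAt, ?_⟩
    rwa [show deriv (fun x => R a + ∫ t in a..x, h t) = h from funext fun x => (hder x).deriv]
  · intro x
    rw [(hder x).deriv]
    exact hhpos x
  · intro x hx
    have : ∫ t in a..x, h t = R x - R a := by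
      refine intervalIntegral.integral_eq_sub_of_hasDerivAt (fun t ht => ?_) (hint _ _)
      rw [Set.uIcc_of_le hx] at ht
      rw [hhf t (ht.1.trans (le_abs_self t))]
      exact hR t ht.1
    simp only [this]
    ring
  · intro x hx
    have h1 : ∫ t in (-a)..x, h t = L x - L (-a) := by
      refine intervalIntegral.integral_eq_sub_of_hasDerivAt (fun t ht => ?_) (hint _ _)
      rw [Set.uIcc_of_ge hx] at ht
      rw [hhf t ((le_neg.2 ht.2).trans (neg_le_abs t))]
      exact hL t ht.2
    have h2 := intervalIntegral.integral_add_adjacent_intervals (hint (-a) a) (hint a x)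
    simp only
    linarith

/-- For `k ≥ 1` the derivative of `-1 / (k x ^ k)` is `1 / x ^ (k + 1)`. -/
lemma hasDerivAt_neg_one_div_mul_pow {k : ℕ} (hk : k ≠ 0) {x : ℝ} (hx : x ≠ 0) :
    HasDerivAt (fun x : ℝ => -1 / ((k : ℝ) * x ^ k)) (x ^ (k + 1))⁻¹ x := by
  obtain ⟨j, rfl⟩ : ∃ j, k = j + 1 := Nat.exists_eq_succ_of_ne_zero hk
  have hk' : ((j + 1 : ℕ) : ℝ) ≠ 0 := by positivity
  have h := (hasDerivAt_const x (-1 : ℝ)).div ((hasDerivAt_pow (j + 1) x).const_mul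
    ((j + 1 : ℕ) : ℝ)) (mul_ne_zero hk' (pow_ne_zero _ hx))
  refine h.congr_deriv ?_
  simp only [Nat.add_sub_cancel]
  field_simp
  ring

theorem exists_desingularization_geps (m : ℕ) (hm : 1 ≤ m) (ε : ℝ) (hε : 0 < ε) :
    ∃ g : ℝ → ℝ, ContDiff ℝ (⊤ : ℕ∞) g ∧
      (∀ x ∈ Set.Ioo (-ε) ε, 0 < deriv g x) ∧
      (∀ x ∈ Set.Ioo (ε / 2) ε,
        g x = if m = 1 then Real.log |x|
          else -1 / ((m - 1 : ℝ) * x ^ (m - 1))) ∧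
      (∀ x ∈ Set.Ioo (-ε) (-(ε / 2)),
        g x = if m = 1 then -Real.log |x| + 2 * Real.log (ε / 2) - ε
          else 1 / ((m - 1 : ℝ) * |x| ^ (m - 1))
            - 2 ^ (m + 1) / ((m - 1 : ℝ) * ε ^ (m - 1))) := by
  have ha : 0 < ε / 2 := by positivity
  obtain ⟨f, hf, hpos, hfe⟩ := exists_smooth_pos_eq_abs_pow_inv m ha
  have hfR : ∀ x, ε / 2 ≤ x → f x = (x ^ m)⁻¹ := fun x hx => by
    rw [hfe x (hx.trans (le_abs_self x)), abs_of_pos (by linarith)]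
  have hfL : ∀ x ≤ -(ε / 2), f x = ((-x) ^ m)⁻¹ := fun x hx => by
    rw [hfe x ((le_neg.2 hx).trans (neg_le_abs x)), abs_of_neg (by linarith)]
  obtain ⟨k, rfl⟩ := Nat.exists_eq_add_of_le' hm
  rcases eq_or_ne k 0 with rfl | hk
  · obtain ⟨g, hg, hg', hgR, hgL⟩ := exists_smooth_interpolation (R := Real.log)
      (L := fun x => -Real.log x + 2 * Real.log (ε / 2) - ε) hf hpos ha
      (fun x hx => by
        rw [hfL x hx]
        have hx0 : x ≠ 0 := by linarith
        refine (((Real.hasDerivAt_log hx0).neg.add_const _).sub_const _).congr_deriv ?_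
        simp [inv_neg])
      (fun x hx => by
        rw [hfR x hx]
        simpa using Real.hasDerivAt_log (by linarith : x ≠ 0))
      (by simp only [Real.log_neg_eq_log]; linarith)
    refine ⟨g, hg, fun x _ => hg' x, fun x hx => ?_, fun x hx => ?_⟩
    · simpa using hgR x hx.1.le
    · simpa using hgL x hx.2.le
  · have hk0 : (0 : ℝ) < k := by positivity
    obtain ⟨g, hg, hg', hgR, hgL⟩ := exists_smooth_interpolation
      (R := fun x => -1 / ((k : ℝ) * x ^ k))
      (L := fun x => -(-1 / ((k : ℝ) * (-x) ^ k)) - 2 ^ (k + 2) / ((k : ℝ) * ε ^ k)) hf hpos ha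
      (fun x hx => by
        rw [hfL x hx]
        have hx0 : -x ≠ 0 := by linarith
        have h := ((hasDerivAt_neg_one_div_mul_pow hk hx0).comp x (hasDerivAt_neg x)).neg.sub_const
          (2 ^ (k + 2) / ((k : ℝ) * ε ^ k))
        exact h.congr_deriv (by ring))
      (fun x hx => by
        rw [hfR x hx]
        exact hasDerivAt_neg_one_div_mul_pow hk (by linarith))
      (by
        -- The gap is `2 ^ (k + 1) / (k ε ^ k)`.
        have h1 : 1 / ((k : ℝ) * (ε / 2) ^ k) = 2 ^ k / ((k : ℝ) * ε ^ k) := by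
          rw [div_pow]
          field_simp
        have h2 : (2 : ℝ) ^ (k + 2) / ((k : ℝ) * ε ^ k) = 4 * (2 ^ k / ((k : ℝ) * ε ^ k)) := by
          ring
        have h3 : 0 < (2 : ℝ) ^ k / ((k : ℝ) * ε ^ k) := by positivity
        simp only [neg_neg, neg_div]
        rw [h2, h1]
        linarith)
    refine ⟨g, hg, fun x _ => hg' x, fun x hx => ?_, fun x hx => ?_⟩
    · simpa [hk] using hgR x hx.1.le
    · have hx' : |x| = -x := abs_of_neg (by linarith [hx.2])
      simpa [hk, hx', neg_div] using hgL x hx.2.le
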